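/- Fix an even integer d = 2k and an integer 1 ≤ j ≤ k−1. Then: (i) for every ε > 0 there exists N such that for all even n ≥ N, fmax(d,n;j) ≥ (2^{−j−1} − ε)·C(n,j+1); and (ii) for all even n, fmax(d,n;j) ≤ (n/(n−1))·(1 − 2^{−d})·C(n,j+1). In particular, fmax(d,n;j)/C(n,j+1) is at least 2^{−j−1} + o(1) and at most 1 − 2^{−d} + o(1) as n → ∞. -/

import Mathlib

open Real

/-- A centrally symmetric polytope in `ℝ^d`: the convex hull of a finite set,
satisfying `P = -P`. -/
def IsCSPolytope {d : ℕ} (P : Set (EuclideanSpace ℝ (Fin d))) : Prop :=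
  (∃ V : Finset (EuclideanSpace ℝ (Fin d)), P = convexHull ℝ (V : Set (EuclideanSpace ℝ (Fin d)))) ∧
  P = -P

/-- The number of `j`-dimensional faces of `P`, a face being the intersection of `P`
with a supporting hyperplane, i.e. a nonempty exposed face. -/
noncomputable def faceCount {d : ℕ} (P : Set (EuclideanSpace ℝ (Fin d))) (j : ℕ) : ℕ :=
  Set.ncard {F : Set (EuclideanSpace ℝ (Fin d)) |
    IsExposed ℝ P F ∧ F.Nonempty ∧ Module.finrank ℝ (vectorSpan ℝ F) = j}

/-- `fmax d n j`: the maximum number of `j`-faces of a `d`-dimensional centrally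
symmetric polytope in `ℝ^d` with exactly `n` vertices. -/
noncomputable def fmax (d n j : ℕ) : ℕ :=
  sSup {m : ℕ | ∃ P : Set (EuclideanSpace ℝ (Fin d)),
    IsCSPolytope P ∧ affineSpan ℝ P = ⊤ ∧
    (Set.extremePoints ℝ P).ncard = n ∧ faceCount P j = m}

/-!
A proper face of a centrally symmetric polytope `P` with vertex set `V` is determined by the
vertices it contains, and even by an affine basis chosen among them.

*Upper bound.* If `u` and `w` lie on a common proper face `{l = c}`, then `l > 0` on `u + int P` and
`l < 0` on `-w + int P`, so these translates are disjoint. All translates `v + int P`, `v ∈ V`, lie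
in `2 int P`, whose volume is `2 ^ d` times theirs; by Cauchy–Schwarz for the function
`∑ v, 1_{v + int P}`, at least `2 ^ (-d) * n ^ 2` ordered pairs of translates meet. Hence at most
`(1 - 2 ^ (-d)) * n ^ 2` ordered pairs of vertices are cofacial. The affine basis of a `j`-face is a
clique of size `j + 1` in the cofaciality graph, and averaging over the `(j + 1)`-subsets of `V`
bounds the proportion of cliques by the edge density.

*Lower bound.* Take `m` points `γ t`, `1 ≤ t < 2`, of the moment curve together with their
antipodes. For a nonempty set `S` of at most `d / 2` parameters, the polynomial
`1 - ∏ s ∈ S, (1 - t / s) ^ 2` has degree at most `d` and no constant term, so it is a linear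
functional evaluated on `γ t`; on `[1, 2)` it takes values in `(0, 1]` and equals `1` exactly on
`S`. Every such `S` therefore spans a face, and `m` choose `j + 1` is asymptotically `2 ^ (-j - 1)`
times `2 * m` choose `j + 1`.
-/

section SecondMoment

open MeasureTheory
open scoped Pointwise ENNReal Finset

theorem sq_sum_measureReal_inter_le {α ι : Type*} [MeasurableSpace α] (μ : Measure α)
    (s : Finset ι) {A : ι → Set α} {B : Set α} (hA : ∀ i, MeasurableSet (A i))
    (hA_fin : ∀ i, μ (A i) ≠ ∞) (hB : MeasurableSet B) (hB_fin : μ B ≠ ∞) :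
    (∑ i ∈ s, μ.real (A i ∩ B)) ^ 2 ≤ (∑ i ∈ s, ∑ j ∈ s, μ.real (A i ∩ A j)) * μ.real B := by
  have cauchy_schwarz := real_inner_mul_inner_self_le
    (∑ i ∈ s, indicatorConstLp 2 (hA i) (hA_fin i) (1 : ℝ)) (indicatorConstLp 2 hB hB_fin (1 : ℝ))
  simpa only [sum_inner, inner_sum, L2.real_inner_indicatorConstLp_one_indicatorConstLp_one,
    Set.inter_self, Set.inter_comm, ← sq] using cauchy_schwarz

open Classical in
theorem sq_card_mul_measureReal_le_card_not_disjoint_mul {G : Type*} [AddGroup G]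
    [MeasurableSpace G] [MeasurableAdd G] (μ : Measure G) [μ.IsAddLeftInvariant] {U B : Set G}
    (hU : MeasurableSet U) (hU_zero : μ U ≠ 0) (hU_fin : μ U ≠ ∞) (hB : MeasurableSet B)
    (hB_fin : μ B ≠ ∞) {V : Finset G} (hV : ∀ u ∈ V, u +ᵥ U ⊆ B) :
    (#V : ℝ) ^ 2 * μ.real U ≤
      #{q ∈ V ×ˢ V | ¬ Disjoint (q.1 +ᵥ U) (q.2 +ᵥ U)} * μ.real B := by
  have measure_translate (u : G) : μ (u +ᵥ U) = μ U := measure_vadd μ u U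
  have measureReal_translate (u : G) : μ.real (u +ᵥ U) = μ.real U := by
    simp only [measureReal_def, measure_translate]
  have translate_ne_top (u : G) : μ (u +ᵥ U) ≠ ∞ := by rwa [measure_translate]
  have sum_inter_B : ∑ u ∈ V, μ.real ((u +ᵥ U) ∩ B) = #V * μ.real U := by
    rw [Finset.sum_congr rfl fun u hu ↦ by
      rw [Set.inter_eq_left.2 (hV u hu), measureReal_translate]]
    simp
  have sum_inter_le : ∑ u ∈ V, ∑ w ∈ V, μ.real ((u +ᵥ U) ∩ (w +ᵥ U)) ≤
      #{q ∈ V ×ˢ V | ¬ Disjoint (q.1 +ᵥ U) (q.2 +ᵥ U)} * μ.real U := by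
    rw [← Finset.sum_product', Finset.card_filter, Nat.cast_sum, Finset.sum_mul]
    refine Finset.sum_le_sum fun q _ ↦ ?_
    by_cases hq : Disjoint (q.1 +ᵥ U) (q.2 +ᵥ U)
    · simp [hq, hq.inter_eq]
    · simpa [hq, measureReal_translate] using
        measureReal_mono (μ := μ) (Set.inter_subset_left (s := q.1 +ᵥ U) (t := q.2 +ᵥ U))
          (translate_ne_top q.1)
  have second_moment := sq_sum_measureReal_inter_le μ V (fun u ↦ hU.const_vadd u)
    translate_ne_top hB hB_fin
  rw [sum_inter_B] at second_moment
  have measureReal_pos : 0 < μ.real U := ENNReal.toReal_pos hU_zero hU_fin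
  refine le_of_mul_le_mul_right ?_ measureReal_pos
  calc (#V : ℝ) ^ 2 * μ.real U * μ.real U = (#V * μ.real U) ^ 2 := by ring
    _ ≤ _ := second_moment
    _ ≤ _ := mul_le_mul_of_nonneg_right sum_inter_le measureReal_nonneg
    _ = _ := by ring

theorem vadd_interior_subset_two_smul_interior {E : Type*} [AddCommGroup E] [Module ℝ E]
    [TopologicalSpace E] [IsTopologicalAddGroup E] [ContinuousConstSMul ℝ E] {P : Set E}
    (hP : Convex ℝ P) {u : E} (hu : u ∈ P) : u +ᵥ interior P ⊆ (2 : ℝ) • interior P := by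
  rintro _ ⟨p, hp, rfl⟩
  refine ⟨(1 / 2 : ℝ) • u + (1 / 2 : ℝ) • p, hP.combo_self_interior_mem_interior hu hp
    (by norm_num) (by norm_num) (by norm_num), ?_⟩
  simp [smul_smul]

open Classical in
theorem sq_card_le_two_pow_mul_card_not_disjoint {E : Type*} [NormedAddCommGroup E]
    [NormedSpace ℝ E] [FiniteDimensional ℝ E] {P : Set E} (hP : Convex ℝ P)
    (hP_bdd : Bornology.IsBounded P) (hP_int : (interior P).Nonempty) {V : Finset E}
    (hVP : (V : Set E) ⊆ P) :
    (#V : ℝ) ^ 2 ≤ (2 : ℝ) ^ Module.finrank ℝ E *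
      #{q ∈ V ×ˢ V | ¬ Disjoint (q.1 +ᵥ interior P) (q.2 +ᵥ interior P)} := by
  let _ : MeasurableSpace E := borel E
  have _ : BorelSpace E := ⟨rfl⟩
  let μ : Measure E := Measure.addHaar
  have interior_ne_zero : μ (interior P) ≠ 0 := (isOpen_interior.measure_pos μ hP_int).ne'
  have interior_ne_top : μ (interior P) ≠ ∞ := (hP_bdd.subset interior_subset).measure_lt_top.ne
  have double_interior : μ ((2 : ℝ) • interior P) =
      ENNReal.ofReal (2 ^ Module.finrank ℝ E) * μ (interior P) := by
    rw [Measure.addHaar_smul, abs_of_pos (by positivity)]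
  have key := sq_card_mul_measureReal_le_card_not_disjoint_mul μ isOpen_interior.measurableSet
    interior_ne_zero interior_ne_top (isOpen_interior.smul₀ two_ne_zero).measurableSet
    (double_interior ▸ ENNReal.mul_ne_top ENNReal.ofReal_ne_top interior_ne_top)
    (fun u hu ↦ vadd_interior_subset_two_smul_interior hP (hVP hu))
  have double_interior_real : μ.real ((2 : ℝ) • interior P) =
      2 ^ Module.finrank ℝ E * μ.real (interior P) := by
    rw [measureReal_def, double_interior, ENNReal.toReal_mul, ENNReal.toReal_ofReal (by positivity),
      measureReal_def]
  rw [double_interior_real] at key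
  have measureReal_pos : 0 < μ.real (interior P) :=
    ENNReal.toReal_pos interior_ne_zero interior_ne_top
  refine le_of_mul_le_mul_right ?_ measureReal_pos
  linarith

end SecondMoment

section ExposedSubsets

theorem convexHull_sep_eq_of_forall_le {E L : Type*} [AddCommGroup E] [Module ℝ E]
    [FunLike L E ℝ] [LinearMapClass L ℝ E ℝ] (l : L) {V : Set E} {c : ℝ} (hV : ∀ v ∈ V, l v ≤ c) :
    convexHull ℝ {v ∈ V | l v = c} = {x ∈ convexHull ℝ V | l x = c} := by
  refine (Set.subset_inter (convexHull_mono (Set.sep_subset V _))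
    (convexHull_min (fun v hv ↦ hv.2) (convex_hyperplane (l : E →ₗ[ℝ] ℝ).isLinear c))).antisymm ?_
  suffices hull_subset : convexHull ℝ V ⊆
      {x | l x ≤ c ∧ (l x = c → x ∈ convexHull ℝ {v ∈ V | l v = c})} from
    fun x hx ↦ (hull_subset hx.1).2 hx.2
  refine convexHull_min (fun v hv ↦ ⟨hV v hv, fun h ↦ subset_convexHull ℝ _ ⟨hv, h⟩⟩) ?_
  refine convex_iff_forall_pos.2 fun x hx y hy a b ha hb hab ↦ ?_
  have l_combo : l (a • x + b • y) = a * l x + b * l y := by simp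
  have hc : a * c + b * c = c := by rw [← add_mul, hab, one_mul]
  have hax := mul_le_mul_of_nonneg_left hx.1 ha.le
  have hby := mul_le_mul_of_nonneg_left hy.1 hb.le
  refine ⟨by linarith, fun h ↦ ?_⟩
  have hlx : l x = c := mul_left_cancel₀ ha.ne' (by linarith)
  have hly : l y = c := mul_left_cancel₀ hb.ne' (by linarith)
  exact convex_convexHull ℝ _ (hx.2 hlx) (hy.2 hly) ha.le hb.le hab

variable {E : Type*} [AddCommGroup E] [Module ℝ E] [TopologicalSpace E] {V A F P : Set E}

theorem isExposed_sep_of_forall_le (l : StrongDual ℝ E) {c : ℝ} (hV : ∀ v ∈ V, l v ≤ c) :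
    IsExposed ℝ V {v ∈ V | l v = c} := by
  rintro ⟨v₀, hv₀, rfl⟩
  exact ⟨l, Set.sep_ext_iff.2 fun v hv ↦ ⟨fun h w hw ↦ h ▸ hV w hw,
    fun h ↦ (hV v hv).antisymm (h v₀ hv₀)⟩⟩

theorem exists_eq_sep_of_isExposed (hA : IsExposed ℝ V A) (hA_ne : A.Nonempty) :
    ∃ (l : StrongDual ℝ E) (c : ℝ), (∀ v ∈ V, l v ≤ c) ∧ A = {v ∈ V | l v = c} := by
  obtain ⟨l, hl⟩ := hA hA_ne
  obtain ⟨a, ha⟩ := hA_ne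
  have hla : ∀ v ∈ V, l v ≤ l a := (hl ▸ ha).2
  refine ⟨l, l a, hla, hl.trans (Set.sep_ext_iff.2 fun v hv ↦ ?_)⟩
  exact ⟨fun h ↦ (hla v hv).antisymm (h a (hA.subset ha)), fun h w hw ↦ h ▸ hla w hw⟩

theorem isExposed_convexHull_convexHull (hA : IsExposed ℝ V A) :
    IsExposed ℝ (convexHull ℝ V) (convexHull ℝ A) := by
  obtain rfl | hA_ne := A.eq_empty_or_nonempty
  · simpa only [convexHull_empty] using isExposed_empty
  obtain ⟨l, c, hl, rfl⟩ := exists_eq_sep_of_isExposed hA hA_ne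
  rw [convexHull_sep_eq_of_forall_le l hl]
  exact isExposed_sep_of_forall_le l
    (convexHull_min hl (convex_halfSpace_le l.toLinearMap.isLinear c))

theorem inter_convexHull_of_isExposed (hA : IsExposed ℝ V A) : V ∩ convexHull ℝ A = A := by
  refine Set.Subset.antisymm ?_ (Set.subset_inter hA.subset (subset_convexHull ℝ A))
  obtain rfl | hA_ne := A.eq_empty_or_nonempty
  · simp
  obtain ⟨l, c, hl, rfl⟩ := exists_eq_sep_of_isExposed hA hA_ne
  rw [convexHull_sep_eq_of_forall_le l hl]
  exact fun v hv ↦ ⟨hv.1, hv.2.2⟩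

theorem convexHull_inter_of_isExposed (hF : IsExposed ℝ (convexHull ℝ V) F) :
    convexHull ℝ (V ∩ F) = F := by
  obtain rfl | hF_ne := F.eq_empty_or_nonempty
  · simp
  obtain ⟨l, c, hl, hF_eq⟩ := exists_eq_sep_of_isExposed hF hF_ne
  have hVF : V ∩ F = {v ∈ V | l v = c} := by
    ext v
    rw [hF_eq]
    exact ⟨fun hv ↦ ⟨hv.1, hv.2.2⟩, fun hv ↦ ⟨hv.1, subset_convexHull ℝ V hv.1, hv.2⟩⟩
  rw [hVF, hF_eq]
  exact convexHull_sep_eq_of_forall_le l fun v hv ↦ hl v (subset_convexHull ℝ V hv)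

theorem injOn_inter_isExposed (V : Set E) :
    Set.InjOn (V ∩ ·) {F | IsExposed ℝ (convexHull ℝ V) F} := fun F hF F' hF' h ↦ by
  rw [← convexHull_inter_of_isExposed hF, ← convexHull_inter_of_isExposed hF']
  exact congrArg (convexHull ℝ) h

theorem inter_affineSpan_of_isExposed (hF : IsExposed ℝ P F) :
    P ∩ affineSpan ℝ F = F := by
  refine Set.Subset.antisymm ?_ (Set.subset_inter hF.subset (subset_affineSpan ℝ F))
  obtain rfl | hF_ne := F.eq_empty_or_nonempty
  · simp
  obtain ⟨l, c, -, hF_eq⟩ := exists_eq_sep_of_isExposed hF hF_ne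
  have span_le : affineSpan ℝ F ≤ (AffineSubspace.mk' c ⊥).comap l.toLinearMap.toAffineMap :=
    affineSpan_le.2 fun x hx ↦ by simpa [sub_eq_zero] using (hF_eq ▸ hx).2
  rw [hF_eq] at span_le ⊢
  exact fun x hx ↦ ⟨hx.1, by simpa [sub_eq_zero] using span_le hx.2⟩

theorem exists_affineBasis_of_isExposed (hV : V.Finite) (hF : IsExposed ℝ (convexHull ℝ V) F)
    (hF_ne : F.Nonempty) : ∃ S : Finset E, (S : Set E) ⊆ V ∩ F ∧
      S.card = Module.finrank ℝ (vectorSpan ℝ F) + 1 ∧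
      affineSpan ℝ (S : Set E) = affineSpan ℝ F := by
  obtain ⟨t, ht, ht_span, ht_indep⟩ := exists_affineIndependent ℝ E (V ∩ F)
  obtain ⟨S, rfl⟩ := ((hV.inter_of_left F).subset ht).exists_finset_coe
  have hS_span : affineSpan ℝ (S : Set E) = affineSpan ℝ F := by
    rw [ht_span, ← affineSpan_convexHull, convexHull_inter_of_isExposed hF]
  refine ⟨S, ht, ?_, hS_span⟩
  have hS_ne : Nonempty (S : Set E) := by
    rwa [Set.nonempty_coe_sort, ← affineSpan_nonempty ℝ, hS_span, affineSpan_nonempty]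
  have finrank_span := ht_indep.finrank_vectorSpan_add_one
  rw [Subtype.range_coe, ← direction_affineSpan, hS_span, direction_affineSpan] at finrank_span
  simpa using finrank_span.symm

/-- Two points are cofacial in `P` when some proper exposed face of `P` contains both. The vertices
of a proper face form a clique for this relation, which is how it bounds the number of faces. -/
def Cofacial (P : Set E) (u w : E) : Prop :=
  ∃ F, IsExposed ℝ P F ∧ F ≠ P ∧ u ∈ F ∧ w ∈ F

end ExposedSubsets

section Cliques

open scoped Finset

theorem choose_mul_sq_sub_self {n r : ℕ} (hr : 2 ≤ r) :
    n.choose r * (r * r - r) = (n * n - n) * (n - 2).choose (r - 2) := by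
  have two_mul_choose_two (a : ℕ) : a * a - a = 2 * a.choose 2 := by
    rw [← Nat.mul_sub_one, Nat.choose_two_right,
      Nat.mul_div_cancel' (Nat.even_mul_pred_self a).two_dvd]
  rw [two_mul_choose_two, two_mul_choose_two, mul_left_comm, Nat.choose_mul hr, mul_assoc]

theorem card_cliques_mul_card_offDiag_le {α : Type*} [DecidableEq α] (R : α → α → Prop)
    [DecidableRel R] (V : Finset α) {r : ℕ} (hr : 2 ≤ r) :
    #{S ∈ V.powersetCard r | ∀ u ∈ S, ∀ w ∈ S, u ≠ w → R u w} * #V.offDiag ≤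
      #{q ∈ V.offDiag | R q.1 q.2} * (#V).choose r := by
  set cliques := {S ∈ V.powersetCard r | ∀ u ∈ S, ∀ w ∈ S, u ≠ w → R u w}
  set edges := {q ∈ V.offDiag | R q.1 q.2}
  have incidences : #cliques * (r * r - r) ≤ #edges * (#V - 2).choose (r - 2) := by
    refine Finset.card_mul_le_card_mul (fun S q ↦ q ∈ S.offDiag) (fun S hS ↦ ?_) fun q hq ↦ ?_
    · obtain ⟨hS_mem, hS_clique⟩ := Finset.mem_filter.1 hS
      obtain ⟨hSV, hS_card⟩ := Finset.mem_powersetCard.1 hS_mem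
      rw [← hS_card, ← Finset.offDiag_card]
      refine Finset.card_le_card fun q hq ↦ ?_
      obtain ⟨hu, hw, huw⟩ := Finset.mem_offDiag.1 hq
      exact Finset.mem_filter.2 ⟨Finset.mem_filter.2 ⟨Finset.offDiag_mono hSV hq,
        hS_clique _ hu _ hw huw⟩, hq⟩
    · obtain ⟨hu, hw, huw⟩ := Finset.mem_offDiag.1 (Finset.mem_filter.1 hq).1
      rw [← Finset.card_pair huw, ← Finset.card_filter_powersetCard_subset {q.1, q.2} V r
        (by grind) ((Finset.card_pair huw).trans_le hr)]
      refine Finset.card_le_card fun S hS ↦ ?_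
      grind [Finset.bipartiteBelow]
  have hr_pos : 0 < r * r - r := Nat.sub_pos_of_lt (by nlinarith)
  refine Nat.le_of_mul_le_mul_right ?_ hr_pos
  calc #cliques * #V.offDiag * (r * r - r)
      = #cliques * (r * r - r) * #V.offDiag := by ring
    _ ≤ #edges * (#V - 2).choose (r - 2) * #V.offDiag := Nat.mul_le_mul_right _ incidences
    _ = #edges * (#V).choose r * (r * r - r) := by
      rw [mul_assoc _ (Nat.choose _ r), choose_mul_sq_sub_self hr, Finset.offDiag_card]; ring

theorem card_cliques_le_of_card_edges_le {α : Type*} [DecidableEq α] (R : α → α → Prop)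
    [DecidableRel R] (V : Finset α) {r : ℕ} (hr : 2 ≤ r) {δ : ℝ}
    (h_edges : #{q ∈ V.offDiag | R q.1 q.2} ≤ δ * (#V : ℝ) ^ 2) :
    (#{S ∈ V.powersetCard r | ∀ u ∈ S, ∀ w ∈ S, u ≠ w → R u w} : ℝ) ≤
      (#V : ℝ) / ((#V : ℝ) - 1) * δ * ((#V).choose r : ℝ) := by
  obtain hV_le | hV_gt := le_or_gt #V 1
  · have hV_lt : #V < r := hV_le.trans_lt hr
    simp [Finset.powersetCard_eq_empty.2 hV_lt, Nat.choose_eq_zero_of_lt hV_lt]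
  have card_offDiag : (#V.offDiag : ℝ) = #V * (#V - 1) := by
    rw [Finset.offDiag_card, Nat.cast_sub (Nat.le_mul_self _)]; push_cast; ring
  have cliques_mul_le := card_cliques_mul_card_offDiag_le R V hr
  rify at cliques_mul_le hV_gt
  have card_sub_one_pos : (0 : ℝ) < #V - 1 := by linarith
  rw [card_offDiag] at cliques_mul_le
  refine le_of_mul_le_mul_right ?_ (show (0 : ℝ) < #V * (#V - 1) by positivity)
  calc _ ≤ _ := cliques_mul_le
    _ ≤ δ * #V ^ 2 * (#V).choose r := by gcongr
    _ = _ := by field_simp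

end Cliques

section UpperBound

open scoped Pointwise Finset

theorem lt_of_mem_interior_of_forall_le {E : Type*} [AddCommGroup E] [Module ℝ E]
    [TopologicalSpace E] [ContinuousAdd E] [ContinuousSMul ℝ E] {P : Set E} {l : StrongDual ℝ E}
    (hl : l ≠ 0) {c : ℝ} (hP : ∀ x ∈ P, l x ≤ c) {x : E} (hx : x ∈ interior P) : l x < c := by
  have image_subset : l '' interior P ⊆ Set.Iic c :=
    Set.image_subset_iff.2 fun y hy ↦ hP y (interior_subset hy)
  have image_open : IsOpen (l '' interior P) := l.isOpenMap_of_ne_zero hl _ isOpen_interior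
  have := image_open.subset_interior_iff.2 image_subset (Set.mem_image_of_mem l hx)
  rwa [interior_Iic] at this

theorem disjoint_vadd_interior_of_cofacial {E : Type*} [AddCommGroup E] [Module ℝ E]
    [TopologicalSpace E] [ContinuousAdd E] [ContinuousSMul ℝ E] {P : Set E} (hP : -P = P) {u w : E}
    (h : Cofacial P u w) : Disjoint (u +ᵥ interior P) (-w +ᵥ interior P) := by
  obtain ⟨F, hF, hF_ne, hu, hw⟩ := h
  obtain ⟨l, c, hl, rfl⟩ := exists_eq_sep_of_isExposed hF ⟨u, hu⟩
  have hl_ne : l ≠ 0 := by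
    rintro rfl
    exact hF_ne (Set.sep_eq_self_iff_mem_true.2 fun x _ ↦ by simpa using hu.2)
  rw [Set.disjoint_left]
  rintro _ ⟨p, hp, rfl⟩ ⟨q, hq, hpq⟩
  have l_eq : -c + l q = c + l p := by simpa [hu.2, hw.2] using congrArg l hpq
  have lq_lt : l q < c := lt_of_mem_interior_of_forall_le hl_ne hl hq
  have neg_c_le : -l p ≤ c := by
    simpa using hl (-p) (hP ▸ Set.neg_mem_neg.2 (interior_subset hp))
  linarith

open Classical in
theorem card_cofacial_le {E : Type*} [NormedAddCommGroup E] [NormedSpace ℝ E]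
    [FiniteDimensional ℝ E] {P : Set E} (hP : Convex ℝ P) (hP_bdd : Bornology.IsBounded P)
    (hP_int : (interior P).Nonempty) (hP_neg : -P = P) {V : Finset E} (hVP : (V : Set E) ⊆ P)
    (hV_neg : ∀ v ∈ V, -v ∈ V) :
    (#{q ∈ V ×ˢ V | Cofacial P q.1 q.2} : ℝ) ≤
      (1 - (2 : ℝ) ^ (-(Module.finrank ℝ E : ℤ))) * #V ^ 2 := by
  have cofacial_le_disjoint : #{q ∈ V ×ˢ V | Cofacial P q.1 q.2} ≤
      #{q ∈ V ×ˢ V | Disjoint (q.1 +ᵥ interior P) (q.2 +ᵥ interior P)} := by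
    refine Finset.card_le_card_of_injOn (fun q ↦ (q.1, -q.2)) (fun q hq ↦ ?_) fun q _ q' _ h ↦ ?_
    · obtain ⟨hq_mem, hq_cofacial⟩ := Finset.mem_filter.1 hq
      obtain ⟨hu, hw⟩ := Finset.mem_product.1 hq_mem
      exact Finset.mem_filter.2 ⟨Finset.mk_mem_product hu (hV_neg _ hw),
        disjoint_vadd_interior_of_cofacial hP_neg hq_cofacial⟩
    · simpa [Prod.ext_iff] using h
  have disjoint_add_not_disjoint := Finset.card_filter_add_card_filter_not (s := V ×ˢ V)
    fun q ↦ Disjoint (q.1 +ᵥ interior P) (q.2 +ᵥ interior P)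
  rw [Finset.card_product, ← sq] at disjoint_add_not_disjoint
  have not_disjoint_ge := sq_card_le_two_pow_mul_card_not_disjoint hP hP_bdd hP_int hVP
  rw [← inv_mul_le_iff₀ (by positivity)] at not_disjoint_ge
  rw [zpow_neg, zpow_natCast, one_sub_mul]
  rify at cofacial_le_disjoint disjoint_add_not_disjoint
  linarith

/-- The `j`-dimensional faces of `P`, i.e. the family counted by `faceCount`. Nonemptiness is
imposed separately because `IsExposed` admits the empty set. -/
def exposedFaces {E : Type*} [AddCommGroup E] [Module ℝ E] [TopologicalSpace E] (P : Set E)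
    (j : ℕ) : Set (Set E) :=
  {F | IsExposed ℝ P F ∧ F.Nonempty ∧ Module.finrank ℝ (vectorSpan ℝ F) = j}

theorem finite_exposedFaces_convexHull {E : Type*} [AddCommGroup E] [Module ℝ E]
    [TopologicalSpace E] {V : Set E} (hV : V.Finite) (j : ℕ) :
    (exposedFaces (convexHull ℝ V) j).Finite :=
  .of_injOn (t := 𝒫 V) (fun _ _ ↦ Set.inter_subset_left)
    ((injOn_inter_isExposed V).mono fun _ hF ↦ hF.1) hV.powerset

open Classical in
theorem ncard_exposedFaces_le_card_cofacial_cliques {E : Type*} [AddCommGroup E] [Module ℝ E]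
    [TopologicalSpace E] (V : Finset E) {j : ℕ}
    (hj : j < Module.finrank ℝ (vectorSpan ℝ (V : Set E))) :
    (exposedFaces (convexHull ℝ (V : Set E)) j).ncard ≤
      #{S ∈ V.powersetCard (j + 1) |
        ∀ u ∈ S, ∀ w ∈ S, u ≠ w → Cofacial (convexHull ℝ (V : Set E)) u w} := by
  have basis_exists (F : Set E) (hF : F ∈ exposedFaces (convexHull ℝ (V : Set E)) j) :=
    exists_affineBasis_of_isExposed V.finite_toSet hF.1 hF.2.1
  choose! basis basis_subset basis_card basis_span using basis_exists
  rw [← Set.ncard_coe_finset]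
  refine Set.ncard_le_ncard_of_injOn basis (fun F hF ↦ ?_) (fun F hF F' hF' h ↦ ?_)
    (Finset.finite_toSet _)
  · have F_ne : F ≠ convexHull ℝ (V : Set E) := by
      rintro rfl
      have := hF.2.2
      rw [← direction_affineSpan, affineSpan_convexHull, direction_affineSpan] at this
      exact hj.ne' this
    have mem_F : ∀ u ∈ basis F, u ∈ F := fun u hu ↦ (basis_subset F hF hu).2
    exact Finset.mem_coe.2 <| Finset.mem_filter.2
      ⟨Finset.mem_powersetCard.2 ⟨fun u hu ↦ (basis_subset F hF hu).1, hF.2.2 ▸ basis_card F hF⟩,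
        fun u hu w hw _ ↦ ⟨F, hF.1, F_ne, mem_F u hu, mem_F w hw⟩⟩
  · rw [← inter_affineSpan_of_isExposed hF.1, ← inter_affineSpan_of_isExposed hF'.1,
      ← basis_span F hF, ← basis_span F' hF', h]

theorem ncard_exposedFaces_convexHull_le {E : Type*} [NormedAddCommGroup E] [NormedSpace ℝ E]
    [FiniteDimensional ℝ E] {V : Finset E} (hV_neg : ∀ v ∈ V, -v ∈ V)
    (hV_span : affineSpan ℝ (V : Set E) = ⊤) {j : ℕ} (hj : 1 ≤ j)
    (hj_lt : j < Module.finrank ℝ E) :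
    ((exposedFaces (convexHull ℝ (V : Set E)) j).ncard : ℝ) ≤
      (#V : ℝ) / ((#V : ℝ) - 1) * (1 - (2 : ℝ) ^ (-(Module.finrank ℝ E : ℤ))) *
        ((#V).choose (j + 1) : ℝ) := by
  classical
  set P := convexHull ℝ (V : Set E)
  have hV_neg_set : -(V : Set E) = V :=
    Set.Subset.antisymm (fun v hv ↦ by simpa using hV_neg _ hv) fun v hv ↦ hV_neg v hv
  have faces_le_cliques := ncard_exposedFaces_le_card_cofacial_cliques V (j := j) (by
    rwa [← direction_affineSpan, hV_span, AffineSubspace.direction_top, finrank_top])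
  have cofacial_le := card_cofacial_le (convex_convexHull ℝ (V : Set E))
    (isBounded_convexHull.2 V.finite_toSet.isBounded)
    (interior_convexHull_nonempty_iff_affineSpan_eq_top.2 hV_span)
    (by rw [← convexHull_neg, hV_neg_set]) (subset_convexHull ℝ _) hV_neg
  have edges_le : #{q ∈ V.offDiag | Cofacial P q.1 q.2} ≤ #{q ∈ V ×ˢ V | Cofacial P q.1 q.2} :=
    Finset.card_le_card (Finset.filter_subset_filter _ fun q hq ↦ by grind)
  calc ((exposedFaces P j).ncard : ℝ) ≤ _ := Nat.cast_le.2 faces_le_cliques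
    _ ≤ _ := card_cliques_le_of_card_edges_le (Cofacial P) V (by omega)
      ((Nat.cast_le.2 edges_le).trans cofacial_le)

end UpperBound

section CentralSymmetry

open scoped Pointwise

variable {E : Type*} [AddCommGroup E] [Module ℝ E] {P : Set E}

theorem neg_mem_extremePoints (hP : -P = P) {v : E} (hv : v ∈ P.extremePoints ℝ) :
    -v ∈ P.extremePoints ℝ := by
  have image_neg : (fun x ↦ -x) '' P.extremePoints ℝ = ((fun x ↦ -x) '' P).extremePoints ℝ :=
    image_extremePoints (LinearEquiv.neg ℝ) P
  rw [Set.image_neg_eq_neg, Set.image_neg_eq_neg, hP] at image_neg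
  rwa [← Set.mem_neg, image_neg]

theorem coe_affineSpan_eq_span_of_neg_eq (hP : -P = P) (hP_ne : P.Nonempty) :
    (affineSpan ℝ P : Set E) = Submodule.span ℝ P := by
  obtain ⟨v, hv⟩ := hP_ne
  have neg_mem : -v ∈ P := hP ▸ Set.neg_mem_neg.2 hv
  have zero_mem : (0 : E) ∈ affineSpan ℝ P := midpoint_self_neg ℝ v ▸ AffineMap.lineMap_mem _
    (subset_affineSpan ℝ P hv) (subset_affineSpan ℝ P neg_mem)
  rw [← affineSpan_insert_eq_affineSpan ℝ zero_mem, affineSpan_insert_zero]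

end CentralSymmetry

section FMax

variable {d : ℕ} {P : Set (EuclideanSpace ℝ (Fin d))}

namespace IsCSPolytope

theorem finite_extremePoints (hP : IsCSPolytope P) : (P.extremePoints ℝ).Finite := by
  obtain ⟨⟨V, rfl⟩, -⟩ := hP
  exact V.finite_toSet.subset extremePoints_convexHull_subset

theorem convexHull_extremePoints (hP : IsCSPolytope P) :
    convexHull ℝ (P.extremePoints ℝ) = P := by
  rw [← (hP.finite_extremePoints.isClosed_convexHull ℝ).closure_eq]
  obtain ⟨⟨V, rfl⟩, -⟩ := hP
  exact closure_convexHull_extremePoints (V.finite_toSet.isCompact_convexHull ℝ)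
    (convex_convexHull ℝ _)

theorem faceCount_le_two_pow (hP : IsCSPolytope P) (j : ℕ) :
    faceCount P j ≤ 2 ^ (P.extremePoints ℝ).ncard := by
  rw [← Set.ncard_powerset _ hP.finite_extremePoints]
  refine Set.ncard_le_ncard_of_injOn (P.extremePoints ℝ ∩ ·) (fun _ _ ↦ Set.inter_subset_left)
    ((injOn_inter_isExposed (P.extremePoints ℝ)).mono fun F hF ↦
      hP.convexHull_extremePoints.symm ▸ hF.1)
    hP.finite_extremePoints.powerset

theorem faceCount_le_fmax (hP : IsCSPolytope P) (hP_span : affineSpan ℝ P = ⊤) (j : ℕ) :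
    faceCount P j ≤ fmax d (P.extremePoints ℝ).ncard j := by
  refine le_csSup ⟨2 ^ (P.extremePoints ℝ).ncard, ?_⟩ ⟨P, hP, hP_span, rfl, rfl⟩
  rintro _ ⟨Q, hQ, -, hQ_card, rfl⟩
  exact hQ_card ▸ hQ.faceCount_le_two_pow j

theorem faceCount_le (hP : IsCSPolytope P) (hP_span : affineSpan ℝ P = ⊤) {j : ℕ} (hj : 1 ≤ j)
    (hj_lt : j < d) :
    (faceCount P j : ℝ) ≤
      ((P.extremePoints ℝ).ncard : ℝ) / (((P.extremePoints ℝ).ncard : ℝ) - 1) *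
        (1 - (2 : ℝ) ^ (-(d : ℤ))) * ((P.extremePoints ℝ).ncard.choose (j + 1) : ℝ) := by
  obtain ⟨V, hV⟩ := hP.finite_extremePoints.exists_finset_coe
  have hP_hull : convexHull ℝ (V : Set (EuclideanSpace ℝ (Fin d))) = P :=
    hV ▸ hP.convexHull_extremePoints
  have hV_neg : ∀ v ∈ V, -v ∈ V := fun v hv ↦ by
    rw [← Finset.mem_coe, hV] at hv ⊢
    exact neg_mem_extremePoints hP.2.symm hv
  have hV_span : affineSpan ℝ (V : Set (EuclideanSpace ℝ (Fin d))) = ⊤ := by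
    rw [← affineSpan_convexHull, hP_hull, hP_span]
  have faces_le := ncard_exposedFaces_convexHull_le hV_neg hV_span hj (by simpa using hj_lt)
  rwa [hP_hull, finrank_euclideanSpace_fin, ← Set.ncard_coe_finset, hV] at faces_le

end IsCSPolytope

theorem fmax_le {j : ℕ} (hj : 1 ≤ j) (hj_lt : j < d) (n : ℕ) :
    (fmax d n j : ℝ) ≤
      (n : ℝ) / ((n : ℝ) - 1) * (1 - (2 : ℝ) ^ (-(d : ℤ))) * (n.choose (j + 1) : ℝ) := by
  have bound_nonneg : 0 ≤
      (n : ℝ) / ((n : ℝ) - 1) * (1 - (2 : ℝ) ^ (-(d : ℤ))) * (n.choose (j + 1) : ℝ) := by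
    have density_nonneg : 0 ≤ 1 - (2 : ℝ) ^ (-(d : ℤ)) :=
      sub_nonneg.2 (zpow_le_one_of_nonpos₀ one_le_two (by simp))
    obtain rfl | hn := n.eq_zero_or_pos
    · simp
    · have sub_one_nonneg : (0 : ℝ) ≤ n - 1 := sub_nonneg.2 (Nat.one_le_cast.2 hn)
      positivity
  refine (Nat.le_floor_iff bound_nonneg).1 (csSup_le' ?_)
  rintro _ ⟨P, hP, hP_span, rfl, rfl⟩
  exact Nat.le_floor (hP.faceCount_le hP_span hj hj_lt)

end FMax

section MomentCurve

open Polynomial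
open scoped Finset Pointwise

/-- The moment curve `t ↦ (t, t ^ 2, …, t ^ d)`, on which linear functionals are the polynomials of
degree at most `d` without constant term; coordinate `i : Fin d` carries exponent `i + 1`. -/
noncomputable def momentCurve (d : ℕ) (t : ℝ) : EuclideanSpace ℝ (Fin d) :=
  WithLp.toLp 2 fun i ↦ t ^ ((i : ℕ) + 1)

variable {d : ℕ}

theorem exists_dual_momentCurve_eq_eval {Q : ℝ[X]} (hQ_zero : Q.coeff 0 = 0)
    (hQ_deg : Q.natDegree ≤ d) :
    ∃ l : StrongDual ℝ (EuclideanSpace ℝ (Fin d)), ∀ t, l (momentCurve d t) = Q.eval t := by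
  refine ⟨∑ i : Fin d, Q.coeff ((i : ℕ) + 1) • EuclideanSpace.proj i, fun t ↦ ?_⟩
  rw [eval_eq_sum_range' (Nat.lt_succ_of_le hQ_deg), Finset.sum_range_succ', hQ_zero,
    Finset.sum_range]
  simp [momentCurve]

theorem exists_dual_momentCurve_eq_self (hd : 0 < d) :
    ∃ l : StrongDual ℝ (EuclideanSpace ℝ (Fin d)), ∀ t, l (momentCurve d t) = t := by
  simpa using exists_dual_momentCurve_eq_eval (d := d) coeff_X_zero (natDegree_X_le.trans hd)

theorem momentCurve_injective (hd : 0 < d) : Function.Injective (momentCurve d) :=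
  have ⟨_, hl⟩ := exists_dual_momentCurve_eq_self hd
  Function.LeftInverse.injective hl

theorem momentCurve_ne_neg (hd : 0 < d) {s t : ℝ} (hs : 0 < s) (ht : 0 < t) :
    momentCurve d s ≠ -momentCurve d t := by
  obtain ⟨l, hl⟩ := exists_dual_momentCurve_eq_self hd
  intro h
  have := congrArg l h
  rw [map_neg, hl, hl] at this
  linarith

theorem linearIndependent_momentCurve {S : Finset ℝ} (hS_card : #S ≤ d)
    (hS_ne : ∀ s ∈ S, s ≠ 0) : LinearIndependent ℝ fun s : S ↦ momentCurve d s := by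
  refine Fintype.linearIndependent_iff.2 fun g hg s₀ ↦ ?_
  obtain ⟨l, hl⟩ := exists_dual_momentCurve_eq_eval (d := d)
    (Q := X * ∏ s ∈ S.erase s₀, (X - C s)) (by simp) (by
      refine natDegree_mul_le.trans ?_
      rw [natDegree_X, natDegree_prod_of_monic _ _ fun s _ ↦ monic_X_sub_C s]
      simp only [natDegree_X_sub_C, Finset.sum_const, smul_eq_mul, mul_one]
      rwa [add_comm, Finset.card_erase_add_one s₀.2])
  have l_combo := congrArg l hg
  rw [map_sum, Finset.sum_eq_single s₀, map_smul, map_zero, smul_eq_mul, mul_eq_zero] at l_combo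
  · refine l_combo.resolve_right ?_
    simp only [hl, eval_mul, eval_X, eval_prod, eval_sub, eval_C]
    exact mul_ne_zero (hS_ne s₀ s₀.2) (Finset.prod_ne_zero_iff.2 fun s hs ↦
      sub_ne_zero.2 (Finset.ne_of_mem_erase hs).symm)
  · intro s _ hs
    rw [map_smul, hl, eval_mul, eval_prod, Finset.prod_eq_zero
      (Finset.mem_erase.2 ⟨Subtype.coe_ne_coe.2 hs, s.2⟩) (by simp), mul_zero, smul_zero]
  · simp

theorem finrank_vectorSpan_image_momentCurve_add_one {S : Finset ℝ} (hS_ne : S.Nonempty)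
    (hS_card : #S ≤ d) (hS_zero : ∀ s ∈ S, s ≠ 0) :
    Module.finrank ℝ (vectorSpan ℝ (momentCurve d '' S)) + 1 = #S := by
  have := hS_ne.to_subtype
  have finrank_range := (linearIndependent_momentCurve hS_card
    hS_zero).affineIndependent.finrank_vectorSpan_add_one
  have range_eq : Set.range (fun s : S ↦ momentCurve d s) = momentCurve d '' S :=
    (Set.image_eq_range ..).symm
  rwa [Fintype.card_coe, range_eq] at finrank_range

theorem prod_one_sub_inv_mul_sq_lt_one {S : Finset ℝ} (hS : S.Nonempty) {t : ℝ} (ht : 0 < t)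
    (hS_gt : ∀ s ∈ S, t < 2 * s) : ∏ s ∈ S, (1 - s⁻¹ * t) ^ 2 < 1 := by
  have factor_lt_one (s : ℝ) (hs : s ∈ S) : (1 - s⁻¹ * t) ^ 2 < 1 := by
    have hs_pos : 0 < s := by linarith [hS_gt s hs]
    have ratio_pos : 0 < s⁻¹ * t := by positivity
    have ratio_lt_two : s⁻¹ * t < 2 := by
      rw [inv_mul_lt_iff₀ hs_pos]
      linarith [hS_gt s hs]
    nlinarith
  obtain ⟨s₀, hs₀⟩ := hS
  rw [← Finset.mul_prod_erase _ _ hs₀]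
  exact mul_lt_one_of_nonneg_of_lt_one_left (sq_nonneg _) (factor_lt_one s₀ hs₀)
    (Finset.prod_le_one (fun _ _ ↦ sq_nonneg _) fun s hs ↦
      (factor_lt_one s (Finset.mem_of_mem_erase hs)).le)

theorem prod_one_sub_inv_mul_sq_eq_zero_iff {S : Finset ℝ} (hS : ∀ s ∈ S, s ≠ 0) {t : ℝ} :
    ∏ s ∈ S, (1 - s⁻¹ * t) ^ 2 = 0 ↔ t ∈ S := by
  rw [Finset.prod_eq_zero_iff]
  have factor_eq_zero_iff (s : ℝ) (hs : s ∈ S) : (1 - s⁻¹ * t) ^ 2 = 0 ↔ s = t := by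
    rw [sq_eq_zero_iff, sub_eq_zero, eq_inv_mul_iff_mul_eq₀ (hS s hs), mul_one]
  grind

theorem exists_dual_momentCurve_eq_one_iff {S : Finset ℝ} (hS_card : 2 * #S ≤ d)
    (hS_ne : S.Nonempty) (hS : (S : Set ℝ) ⊆ Set.Ico 1 2) :
    ∃ l : StrongDual ℝ (EuclideanSpace ℝ (Fin d)), ∀ t ∈ Set.Ico (1 : ℝ) 2,
      0 < l (momentCurve d t) ∧ l (momentCurve d t) ≤ 1 ∧ (l (momentCurve d t) = 1 ↔ t ∈ S) := by
  set Q : ℝ[X] := 1 - ∏ s ∈ S, (1 - C s⁻¹ * X) ^ 2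
  have eval_Q (t : ℝ) : Q.eval t = 1 - ∏ s ∈ S, (1 - s⁻¹ * t) ^ 2 := by simp [Q, eval_prod]
  have natDegree_Q : Q.natDegree ≤ d := by
    have natDegree_factor (s : ℝ) : ((1 - C s⁻¹ * X : ℝ[X]) ^ 2).natDegree ≤ 2 := by
      compute_degree
    refine (natDegree_sub_le _ _).trans (max_le (by simp) ((natDegree_prod_le _ _).trans ?_))
    refine (Finset.sum_le_card_nsmul _ _ 2 fun s _ ↦ natDegree_factor s).trans ?_
    rwa [smul_eq_mul, mul_comm]
  obtain ⟨l, hl⟩ := exists_dual_momentCurve_eq_eval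
    (by rw [coeff_zero_eq_eval_zero, eval_Q]; simp) natDegree_Q
  refine ⟨l, fun t ht ↦ ?_⟩
  have prod_lt_one := prod_one_sub_inv_mul_sq_lt_one hS_ne (t := t) (by linarith [ht.1])
    fun s hs ↦ by linarith [ht.2, (hS hs).1]
  have prod_nonneg : 0 ≤ ∏ s ∈ S, (1 - s⁻¹ * t) ^ 2 := Finset.prod_nonneg fun _ _ ↦ sq_nonneg _
  rw [hl, eval_Q, sub_eq_self,
    prod_one_sub_inv_mul_sq_eq_zero_iff fun s hs ↦ by linarith [(hS hs).1]]
  exact ⟨sub_pos.2 prod_lt_one, sub_le_self 1 prod_nonneg, .rfl⟩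

/-- The vertex set of a centrally symmetric analogue of the cyclic polytope, with many faces: the
points of the moment curve with parameters in `T`, together with their antipodes. -/
def csMomentPoints (d : ℕ) (T : Set ℝ) : Set (EuclideanSpace ℝ (Fin d)) :=
  momentCurve d '' T ∪ -(momentCurve d '' T)

theorem neg_csMomentPoints (d : ℕ) (T : Set ℝ) : -csMomentPoints d T = csMomentPoints d T := by
  rw [csMomentPoints, Set.union_neg, neg_neg, Set.union_comm]

theorem finite_csMomentPoints (d : ℕ) {T : Set ℝ} (hT : T.Finite) : (csMomentPoints d T).Finite :=
  (hT.image _).union (hT.image _).neg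

theorem isCSPolytope_convexHull_csMomentPoints (d : ℕ) {T : Set ℝ} (hT : T.Finite) :
    IsCSPolytope (convexHull ℝ (csMomentPoints d T)) := by
  refine ⟨⟨(finite_csMomentPoints d hT).toFinset, by rw [Set.Finite.coe_toFinset]⟩, ?_⟩
  rw [← convexHull_neg, neg_csMomentPoints]

theorem ncard_csMomentPoints (hd : 0 < d) {T : Set ℝ} (hT : T.Finite) (hT_pos : ∀ t ∈ T, 0 < t) :
    (csMomentPoints d T).ncard = 2 * T.ncard := by
  have disjoint_neg : Disjoint (momentCurve d '' T) (-(momentCurve d '' T)) := by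
    rw [Set.disjoint_left]
    rintro _ ⟨s, hs, rfl⟩ ⟨t, ht, h⟩
    exact momentCurve_ne_neg hd (hT_pos t ht) (hT_pos s hs) h
  rw [csMomentPoints, Set.ncard_union_eq disjoint_neg (hT.image _) (hT.image _).neg, Set.ncard_neg,
    Set.ncard_image_of_injective _ (momentCurve_injective hd), two_mul]

theorem affineSpan_csMomentPoints (hd : 0 < d) {T : Finset ℝ} (hT_card : d ≤ #T)
    (hT_ne : ∀ t ∈ T, t ≠ 0) : affineSpan ℝ (csMomentPoints d T) = ⊤ := by
  obtain ⟨S, hST, hS_card⟩ := Finset.exists_subset_card_eq hT_card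
  have linearSpan_eq_top : Submodule.span ℝ (csMomentPoints d T) = ⊤ := by
    have independent := linearIndependent_momentCurve hS_card.le fun s hs ↦ hT_ne s (hST hs)
    rw [eq_top_iff, ← independent.span_eq_top_of_card_eq_finrank' (by simp [hS_card])]
    refine Submodule.span_mono ?_
    rintro _ ⟨s, rfl⟩
    exact .inl ⟨s, hST s.2, rfl⟩
  obtain ⟨t, ht⟩ := Finset.card_pos.1 (hd.trans_le hT_card)
  rw [← SetLike.coe_set_eq, coe_affineSpan_eq_span_of_neg_eq (neg_csMomentPoints d T)
    ⟨_, .inl ⟨t, ht, rfl⟩⟩, linearSpan_eq_top, Submodule.top_coe, AffineSubspace.top_coe]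

theorem isExposed_image_momentCurve {T : Set ℝ} (hT : T ⊆ Set.Ico 1 2) {S : Finset ℝ}
    (hST : (S : Set ℝ) ⊆ T) (hS_card : 2 * #S ≤ d) :
    IsExposed ℝ (csMomentPoints d T) (momentCurve d '' S) := by
  obtain rfl | hS_ne := S.eq_empty_or_nonempty
  · simpa only [Finset.coe_empty, Set.image_empty] using isExposed_empty
  obtain ⟨l, hl⟩ := exists_dual_momentCurve_eq_one_iff hS_card hS_ne (hST.trans hT)
  have l_neg (v) (hv : v ∈ -(momentCurve d '' T)) : l v < 0 := by
    obtain ⟨t, ht, hv_eq⟩ := hv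
    simpa [hv_eq] using (hl t (hT ht)).1
  have image_eq : momentCurve d '' S = {v ∈ csMomentPoints d T | l v = 1} := by
    ext v
    constructor
    · rintro ⟨s, hs, rfl⟩
      exact ⟨.inl ⟨s, hST hs, rfl⟩, (hl s (hT (hST hs))).2.2.2 hs⟩
    · rintro ⟨⟨t, ht, rfl⟩ | hv, l_eq⟩
      · exact ⟨t, (hl t (hT ht)).2.2.1 l_eq, rfl⟩
      · linarith [l_neg v hv]
  rw [image_eq]
  refine isExposed_sep_of_forall_le l ?_
  rintro _ (⟨t, ht, rfl⟩ | hv)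
  · exact (hl t (hT ht)).2.1
  · linarith [l_neg _ hv]

theorem extremePoints_convexHull_csMomentPoints (hd : 2 ≤ d) {T : Set ℝ} (hT : T ⊆ Set.Ico 1 2) :
    (convexHull ℝ (csMomentPoints d T)).extremePoints ℝ = csMomentPoints d T := by
  have image_subset : momentCurve d '' T ⊆
      (convexHull ℝ (csMomentPoints d T)).extremePoints ℝ := by
    rintro _ ⟨t, ht, rfl⟩
    have exposed := isExposed_convexHull_convexHull <|
      isExposed_image_momentCurve (d := d) hT (S := {t}) (by simpa using ht) (by simpa using hd)
    rw [Finset.coe_singleton, Set.image_singleton, convexHull_singleton] at exposed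
    exact isExtreme_singleton.1 exposed.isExtreme
  refine extremePoints_convexHull_subset.antisymm (Set.union_subset image_subset fun v hv ↦ ?_)
  rw [← neg_neg v]
  refine neg_mem_extremePoints ?_ (image_subset hv)
  rw [← convexHull_neg, neg_csMomentPoints]

theorem choose_le_ncard_exposedFaces_csMomentPoints {T : Finset ℝ}
    (hT : (T : Set ℝ) ⊆ Set.Ico 1 2) {j : ℕ} (hj : 2 * (j + 1) ≤ d) :
    (#T).choose (j + 1) ≤ (exposedFaces (convexHull ℝ (csMomentPoints d T)) j).ncard := by
  have hd : 0 < d := by omega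
  have exposed : ∀ S ∈ T.powersetCard (j + 1),
      IsExposed ℝ (csMomentPoints d T) (momentCurve d '' S) := fun S hS ↦ by
    obtain ⟨hST, hS_card⟩ := Finset.mem_powersetCard.1 hS
    exact isExposed_image_momentCurve hT hST (hS_card ▸ hj)
  rw [← Finset.card_powersetCard, ← Set.ncard_coe_finset]
  refine Set.ncard_le_ncard_of_injOn (fun S ↦ convexHull ℝ (momentCurve d '' S)) (fun S hS ↦ ?_)
    (fun S hS S' hS' h ↦ ?_)
    (finite_exposedFaces_convexHull (finite_csMomentPoints d T.finite_toSet) j)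
  · obtain ⟨hST, hS_card⟩ := Finset.mem_powersetCard.1 hS
    have S_ne : S.Nonempty := Finset.card_pos.1 (by omega)
    have finrank_add_one := finrank_vectorSpan_image_momentCurve_add_one (d := d) S_ne (by omega)
      fun s hs ↦ (one_pos.trans_le (hT (hST hs)).1).ne'
    refine ⟨isExposed_convexHull_convexHull (exposed S hS), by simpa using S_ne, ?_⟩
    rw [← direction_affineSpan, affineSpan_convexHull, direction_affineSpan]
    omega
  · refine Finset.coe_injective ((momentCurve_injective hd).image_injective ?_)
    rw [← inter_convexHull_of_isExposed (exposed S hS),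
      ← inter_convexHull_of_isExposed (exposed S' hS')]
    exact congrArg _ h

theorem choose_le_fmax {j m : ℕ} (hj : 2 * (j + 1) ≤ d) (hm : d ≤ m) :
    m.choose (j + 1) ≤ fmax d (2 * m) j := by
  obtain ⟨T, hT, rfl⟩ :=
    (Set.Ico_infinite (one_lt_two (α := ℝ))).exists_subset_card_eq m
  have hT_pos : ∀ t ∈ T, 0 < t := fun t ht ↦ one_pos.trans_le (hT ht).1
  have hd : 0 < d := by omega
  have hP_span : affineSpan ℝ (convexHull ℝ (csMomentPoints d T)) = ⊤ := by
    rw [affineSpan_convexHull, affineSpan_csMomentPoints hd hm fun t ht ↦ (hT_pos t ht).ne']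
  have faces_le_fmax :=
    (isCSPolytope_convexHull_csMomentPoints d T.finite_toSet).faceCount_le_fmax hP_span j
  rw [extremePoints_convexHull_csMomentPoints (by omega) hT,
    ncard_csMomentPoints hd T.finite_toSet hT_pos, Set.ncard_coe_finset] at faces_le_fmax
  exact (choose_le_ncard_exposedFaces_csMomentPoints hT hj).trans faces_le_fmax

end MomentCurve

section Asymptotics

open Asymptotics Filter

theorem isEquivalent_choose_mul {a : ℕ} (ha : 0 < a) (r : ℕ) :
    (fun m : ℕ ↦ ((a * m).choose r : ℝ)) ~[atTop] fun m ↦ (a : ℝ) ^ r * (m.choose r : ℝ) := by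
  have scaled := (isEquivalent_choose r).comp_tendsto (tendsto_id.const_mul_atTop' ha)
  refine scaled.trans (((IsEquivalent.refl (u := fun _ ↦ (a : ℝ) ^ r)).mul
    (isEquivalent_choose r)).symm.congr_left (.of_forall fun m ↦ ?_))
  simp [mul_pow, mul_div_assoc]

theorem eventually_two_zpow_neg_sub_mul_choose_le (r : ℕ) {ε : ℝ} (hε : 0 < ε) :
    ∀ᶠ m : ℕ in atTop,
      ((2 : ℝ) ^ (-(r : ℤ)) - ε) * ((2 * m).choose r : ℝ) ≤ (m.choose r : ℝ) := by
  filter_upwards [(isEquivalent_choose_mul two_pos r).symm.isLittleO.bound hε] with m hm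
  simp only [Pi.sub_apply, Real.norm_eq_abs, Nat.cast_ofNat, Nat.abs_cast] at hm
  have two_pow_mul_ge : (1 - ε) * ((2 * m).choose r : ℝ) ≤ 2 ^ r * m.choose r := by
    linarith [neg_le_of_abs_le hm]
  have two_zpow_le_one : (2 : ℝ) ^ (-(r : ℤ)) ≤ 1 :=
    zpow_le_one_of_nonpos₀ one_le_two (by simp)
  calc ((2 : ℝ) ^ (-(r : ℤ)) - ε) * ((2 * m).choose r : ℝ)
      ≤ ((2 : ℝ) ^ (-(r : ℤ)) * (1 - ε)) * ((2 * m).choose r : ℝ) := by gcongr; nlinarith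
    _ ≤ (2 : ℝ) ^ (-(r : ℤ)) * (2 ^ r * m.choose r) := by rw [mul_assoc]; gcongr
    _ = m.choose r := by rw [zpow_neg, zpow_natCast, inv_mul_cancel_left₀ (by positivity)]

end Asymptotics

theorem stmt_3_general {d j : ℕ} :
    (2 * (j + 1) ≤ d → ∀ ε : ℝ, 0 < ε → ∃ N : ℕ, ∀ n : ℕ, N ≤ n → Even n →
      ((2 : ℝ) ^ (-(j : ℤ) - 1) - ε) * (n.choose (j + 1) : ℝ) ≤ (fmax d n j : ℝ)) ∧
    (1 ≤ j → j < d → ∀ n : ℕ, Even n →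
      (fmax d n j : ℝ) ≤
        ((n : ℝ) / ((n : ℝ) - 1)) * (1 - (2 : ℝ) ^ (-(d : ℤ))) * (n.choose (j + 1) : ℝ)) := by
  refine ⟨fun hjd ε hε ↦ ?_, fun hj hj_lt n _ ↦ fmax_le hj hj_lt n⟩
  obtain ⟨N, hN⟩ := Filter.eventually_atTop.1
    (eventually_two_zpow_neg_sub_mul_choose_le (j + 1) hε)
  refine ⟨2 * max N d, fun n hn hn_even ↦ ?_⟩
  obtain ⟨m, rfl⟩ := hn_even.two_dvd
  obtain ⟨hNm, hdm⟩ := max_le_iff.1 (Nat.le_of_mul_le_mul_left hn two_pos)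
  calc _ = ((2 : ℝ) ^ (-((j + 1 : ℕ) : ℤ)) - ε) * ((2 * m).choose (j + 1) : ℝ) := by
        rw [Nat.cast_succ, neg_add']
    _ ≤ (m.choose (j + 1) : ℝ) := hN m hNm
    _ ≤ _ := Nat.cast_le.2 (choose_le_fmax hjd hdm)

/-- Theorem 1.4: bounds on the maximal number of `j`-faces of a cs `2k`-polytope,
for `1 ≤ j ≤ k-1`, with lower-bound constant `c_j(d) = 2^{-j-1}`. -/
theorem stmt_3 (k j : ℕ) (hk : 0 < k) (hj1 : 1 ≤ j) (hjk : j ≤ k - 1) :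
    (∀ ε : ℝ, 0 < ε → ∃ N : ℕ, ∀ n : ℕ, N ≤ n → Even n →
      ((2 : ℝ) ^ (-(j : ℤ) - 1) - ε) * (n.choose (j + 1) : ℝ) ≤ (fmax (2 * k) n j : ℝ)) ∧
    (∀ n : ℕ, Even n →
      (fmax (2 * k) n j : ℝ) ≤
        ((n : ℝ) / ((n : ℝ) - 1)) * (1 - (2 : ℝ) ^ (-(2 * k : ℤ))) * (n.choose (j + 1) : ℝ)) :=
  ⟨stmt_3_general.1 (by omega), fun n hn ↦ by
    simpa using stmt_3_general.2 hj1 (by omega : j < 2 * k) n hn⟩
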